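/- Let q, a, b be nonzero complex numbers and m ≥ 1 an integer; assume (abq²;q)_{4m−3} ≠ 0. Then the Pfaffian of the skew-symmetric 2m × 2m matrix with (i,j)-entry (q^{i−1} − q^{j−1}) · (aq;q)_{i+j−2} / (abq²;q)_{i+j−2} (for 1 ≤ i, j ≤ 2m) equals a^{m(m−1)} q^{m(m−1)(4m+1)/3} ∏_{k=1}^{m} (q;q)_{2k−1} (aq;q)_{2k−1} (bq;q)_{2k−2} / (abq²;q)_{2(k+m)−3}. -/

import Mathlib

/-!
The matrix `A` is the Gram matrix, in the basis `1, x, x², …`, of the skew form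
`⟨x^i, x^j⟩ = (q^i - q^j) μ_{i+j}` with `μ_n = (aq;q)_n / (abq²;q)_n`. This form becomes *tridiagonal*
in the basis of the monic little `q`-Jacobi polynomials `p_k` with parameters `(a, b/q)`. If `T` is
the unitriangular matrix of coefficients of the `p_k`, then `Pf A = Pf (T A Tᵀ)` (`pfaffian_conj`),
and the Pfaffian of a tridiagonal skew-symmetric matrix is the product of every other superdiagonal
entry (`pfaffian_tridiag`).

By skew-symmetry, tridiagonality only requires `⟨p_k, x^j⟩ = 0` for `j ≤ k - 2`. The coefficients of
`p_k` are such that, up to a constant, `⟨p_k, x^j⟩ = ∑ i, e_i g(q^i)`, where the `e_i` are the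
coefficients of `∏_{l<k} (X - q^l)` and `deg g < k`; such a sum, a `k`-th `q`-difference, vanishes
because `q^s` is a root of `∏_{l<k} (X - q^l)` for each `s < k` (`skew_sum_eq_zero`). For `j = k - 1`
the summand is instead `e_i g(q^i) / (1 - c q^i)` with `c = abq^k` and `deg g = k`, and the sum is
evaluated by replacing `g` by the constant `g(1/c)` (`skew_sum_eq`). The theorem follows by taking
the product of the values for `k = 1, 3, …, 2m - 1`, whose denominators telescope
(`prod_superdiag_denominator`).

The coefficients `e_i` are taken from the polynomial `∏_{l<k} (X - q^l)`, not from quotients of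
`q`-factorials, so that the argument also covers roots of unity `q`.
-/


/-- The q-shifted factorial `(a;q)_n = ∏_{k=0}^{n-1} (1 - a q^k)`. -/
noncomputable def qPoch (q a : ℂ) (n : ℕ) : ℂ := ∏ k ∈ Finset.range n, (1 - a * q ^ k)

/-- The Pfaffian of a `2m × 2m` matrix, via the standard formula
`Pf A = (1/(2^m m!)) Σ_{σ ∈ S_{2m}} sgn(σ) ∏_{i=0}^{m-1} A_{σ(2i), σ(2i+1)}`,
which for a skew-symmetric matrix agrees with the sum over perfect matchings
`Σ_π sgn(π) ∏_{(i,j) matched in π, i<j} A_{i,j}`. -/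
noncomputable def pfaffian {m : ℕ} (A : Matrix (Fin (2 * m)) (Fin (2 * m)) ℂ) : ℂ :=
  (1 / ((2 : ℂ) ^ m * (Nat.factorial m : ℂ))) *
    ∑ σ : Equiv.Perm (Fin (2 * m)),
      ((Equiv.Perm.sign σ : ℤ) : ℂ) *
        ∏ i : Fin m,
          A (σ ⟨2 * (i : ℕ), by have := i.isLt; omega⟩)
            (σ ⟨2 * (i : ℕ) + 1, by have := i.isLt; omega⟩)

/-! ### Pfaffians: change of basis -/

/-- `Fin (2 * m)` as `m` consecutive pairs: `(i, e) ↦ 2 i + e`. -/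
def pairEquiv (m : ℕ) : Fin m × Fin 2 ≃ Fin (2 * m) :=
  finProdFinEquiv.trans (finCongr (Nat.mul_comm m 2))

lemma pairEquiv_val (m : ℕ) (p : Fin m × Fin 2) :
    (pairEquiv m p : ℕ) = 2 * (p.1 : ℕ) + (p.2 : ℕ) := by
  simp [pairEquiv, finProdFinEquiv]; ring

/-- The signed sum over permutations in `pfaffian`, for a matrix whose index set is already split
into pairs, without the normalising factor `1 / (2^m m!)`. -/
noncomputable def pfSum {m : ℕ} (A : Matrix (Fin m × Fin 2) (Fin m × Fin 2) ℂ) : ℂ :=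
  ∑ σ : Equiv.Perm (Fin m × Fin 2),
    ((Equiv.Perm.sign σ : ℤ) : ℂ) * ∏ i : Fin m, A (σ (i, 0)) (σ (i, 1))

lemma pfaffian_eq_pfSum {m : ℕ} (A : Matrix (Fin (2 * m)) (Fin (2 * m)) ℂ) :
    pfaffian A = (1 / ((2 : ℂ) ^ m * (Nat.factorial m : ℂ))) *
      pfSum (A.submatrix (pairEquiv m) (pairEquiv m)) := by
  unfold pfaffian pfSum
  congr 1
  symm
  refine Fintype.sum_equiv (pairEquiv m).permCongr _ _ fun σ => ?_
  rw [Equiv.Perm.sign_permCongr]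
  congr 1
  refine Finset.prod_congr rfl fun i _ => ?_
  have h0 : (pairEquiv m).symm ⟨2 * (i : ℕ), by have := i.isLt; omega⟩ = (i, 0) := by
    rw [Equiv.symm_apply_eq]; apply Fin.ext; simp [pairEquiv_val]
  have h1 : (pairEquiv m).symm ⟨2 * (i : ℕ) + 1, by have := i.isLt; omega⟩ = (i, 1) := by
    rw [Equiv.symm_apply_eq]; apply Fin.ext; simp [pairEquiv_val]
  simp [Equiv.permCongr_apply, h0, h1]

lemma sum_fun_eq_sum_perm {X : Type*} [Fintype X] [DecidableEq X] (h : (X → X) → ℂ)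
    (h0 : ∀ F, ¬ Function.Injective F → h F = 0) :
    ∑ F, h F = ∑ τ : Equiv.Perm X, h τ := by
  symm
  refine Finset.sum_of_injOn (fun τ : Equiv.Perm X => (τ : X → X)) ?_ ?_ ?_ ?_
  · intro a _ b _ hab
    exact DFunLike.coe_injective hab
  · intro a _; simp
  · intro F _ hF
    apply h0
    intro hinj
    exact hF ⟨Equiv.ofBijective F (Finite.injective_iff_bijective.mp hinj), by simp, rfl⟩
  · intro τ _; rfl

/-- The minor expansion behind both Pfaffian lemmas: the alternating sum of
`∏ j, B (σ j) (F j)` is the determinant with columns selected by `F`. -/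
lemma sum_sign_prod {X : Type*} [Fintype X] [DecidableEq X] (B : Matrix X X ℂ) (F : X → X) :
    ∑ σ : Equiv.Perm X, ((Equiv.Perm.sign σ : ℤ) : ℂ) * ∏ j, B (σ j) (F j)
      = (B.submatrix id F).det := by
  rw [Matrix.det_apply']; rfl

lemma det_submatrix_not_injective {X : Type*} [Fintype X] [DecidableEq X] (B : Matrix X X ℂ)
    (F : X → X) (hF : ¬ Function.Injective F) : (B.submatrix id F).det = 0 := by
  simp only [Function.Injective, not_forall] at hF
  obtain ⟨x, y, hxy, hne⟩ := hF
  exact Matrix.det_zero_of_column_eq hne (fun k => by simp [hxy])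

lemma prod_pairs {m : ℕ} (h : Fin m × Fin 2 → ℂ) :
    ∏ j, h j = ∏ i : Fin m, h (i, 0) * h (i, 1) := by
  rw [Fintype.prod_prod_type]
  simp

/-- `Pf (B A Bᵀ) = det B · Pf A`. -/
lemma pfSum_conj {m : ℕ} (B A : Matrix (Fin m × Fin 2) (Fin m × Fin 2) ℂ) :
    pfSum (B * A * B.transpose) = B.det * pfSum A := by
  have key : ∀ σ : Equiv.Perm (Fin m × Fin 2),
      ∏ i : Fin m, (B * A * B.transpose) (σ (i, 0)) (σ (i, 1))
        = ∑ F : Fin m × Fin 2 → Fin m × Fin 2,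
            (∏ i, A (F (i, 0)) (F (i, 1))) * ∏ j, B (σ j) (F j) := by
    intro σ
    have h1 : ∀ i : Fin m, (B * A * B.transpose) (σ (i, 0)) (σ (i, 1))
        = ∑ p : (Fin m × Fin 2) × (Fin m × Fin 2),
            A p.1 p.2 * (B (σ (i, 0)) p.1 * B (σ (i, 1)) p.2) := by
      intro i
      rw [Fintype.sum_prod_type_right]
      simp only [Matrix.mul_apply, Matrix.transpose_apply, Finset.sum_mul]
      refine Finset.sum_congr rfl fun y _ => Finset.sum_congr rfl fun x _ => ?_
      ring
    simp_rw [h1]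
    rw [Fintype.prod_sum]
    symm
    refine Fintype.sum_equiv ((Equiv.curry (Fin m) (Fin 2) (Fin m × Fin 2)).trans
      (Equiv.piCongrRight fun _ => finTwoArrowEquiv (Fin m × Fin 2))) _ _ fun F => ?_
    rw [prod_pairs, ← Finset.prod_mul_distrib]
    rfl
  unfold pfSum
  simp_rw [key, Finset.mul_sum]
  rw [Finset.sum_comm]
  have h2 : ∀ F : Fin m × Fin 2 → Fin m × Fin 2,
      ∑ σ : Equiv.Perm (Fin m × Fin 2), ((Equiv.Perm.sign σ : ℤ) : ℂ) *
        ((∏ i, A (F (i, 0)) (F (i, 1))) * ∏ j, B (σ j) (F j))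
      = (∏ i, A (F (i, 0)) (F (i, 1))) * (B.submatrix id F).det := by
    intro F
    rw [← sum_sign_prod, Finset.mul_sum]
    exact Finset.sum_congr rfl fun σ _ => by ring
  simp_rw [h2]
  rw [sum_fun_eq_sum_perm]
  · refine Finset.sum_congr rfl fun τ _ => ?_
    rw [Matrix.det_permute']
    ring
  · intro F hF
    rw [det_submatrix_not_injective B F hF, mul_zero]

/-- The standard symplectic matrix, a direct sum of `m` blocks `[[0, 1], [-1, 0]]`, written as a
sum over the permutations of the two elements of a block. -/
noncomputable def sympl (m : ℕ) : Matrix (Fin m × Fin 2) (Fin m × Fin 2) ℂ :=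
  Matrix.of fun x y => ∑ p : Fin m × Equiv.Perm (Fin 2), ((Equiv.Perm.sign p.2 : ℤ) : ℂ) *
    ((1 : Matrix (Fin m × Fin 2) (Fin m × Fin 2) ℂ) x (p.1, p.2 0) *
     (1 : Matrix (Fin m × Fin 2) (Fin m × Fin 2) ℂ) y (p.1, p.2 1))

/-- Each of the `2^m m!` permutations preserving the block structure contributes `1`. -/
lemma pfSum_sympl (m : ℕ) : pfSum (sympl m) = (2 : ℂ) ^ m * (Nat.factorial m : ℂ) := by
  classical
  let W : (Fin m → Fin m) → (Fin m → Equiv.Perm (Fin 2)) → Fin m × Fin 2 → Fin m × Fin 2 :=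
    fun c ε j => (c j.1, ε j.1 j.2)
  have key : ∀ σ : Equiv.Perm (Fin m × Fin 2),
      ∏ i : Fin m, sympl m (σ (i, 0)) (σ (i, 1))
        = ∑ c : Fin m → Fin m, ∑ ε : Fin m → Equiv.Perm (Fin 2),
            (∏ i, ((Equiv.Perm.sign (ε i) : ℤ) : ℂ)) *
              ∏ j, (1 : Matrix (Fin m × Fin 2) (Fin m × Fin 2) ℂ) (σ j) (W c ε j) := by
    intro σ
    simp only [sympl, Matrix.of_apply]
    rw [Fintype.prod_sum, ← Fintype.sum_prod_type']
    refine Fintype.sum_equiv (Equiv.arrowProdEquivProdArrow (Fin m) _ _) _ _ fun F => ?_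
    rw [prod_pairs, ← Finset.prod_mul_distrib]
    rfl
  have h2 : ∀ c ε, ∑ σ : Equiv.Perm (Fin m × Fin 2), ((Equiv.Perm.sign σ : ℤ) : ℂ) *
        ((∏ i, ((Equiv.Perm.sign (ε i) : ℤ) : ℂ)) *
          ∏ j, (1 : Matrix (Fin m × Fin 2) (Fin m × Fin 2) ℂ) (σ j) (W c ε j))
      = (∏ i, ((Equiv.Perm.sign (ε i) : ℤ) : ℂ)) *
          ((1 : Matrix (Fin m × Fin 2) (Fin m × Fin 2) ℂ).submatrix id (W c ε)).det := by
    intro c ε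
    rw [← sum_sign_prod, Finset.mul_sum]
    exact Finset.sum_congr rfl fun σ _ => by ring
  unfold pfSum
  simp_rw [key, Finset.mul_sum]
  rw [Finset.sum_comm]
  simp_rw [Finset.sum_comm (s := (Finset.univ : Finset (Equiv.Perm (Fin m × Fin 2)))), h2]
  rw [sum_fun_eq_sum_perm]
  · have h3 : ∀ (c : Equiv.Perm (Fin m)) (ε : Fin m → Equiv.Perm (Fin 2)),
        (∏ i, ((Equiv.Perm.sign (ε i) : ℤ) : ℂ)) *
          ((1 : Matrix (Fin m × Fin 2) (Fin m × Fin 2) ℂ).submatrix id (W c ε)).det = 1 := by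
      intro c ε
      have hW : W c ε = ((Equiv.prodCongrLeft fun _ : Fin 2 => c) *
          Equiv.prodCongrRight ε : Equiv.Perm (Fin m × Fin 2)) := by
        funext j; rfl
      have hs : Equiv.Perm.sign ((Equiv.prodCongrLeft fun _ : Fin 2 => c) *
          Equiv.prodCongrRight ε : Equiv.Perm (Fin m × Fin 2)) = ∏ i, Equiv.Perm.sign (ε i) := by
        rw [Equiv.Perm.sign_mul, Equiv.Perm.sign_prodCongrLeft, Equiv.Perm.sign_prodCongrRight]
        simp
      rw [hW, Matrix.det_permute', hs, Matrix.det_one, mul_one]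
      push_cast
      rw [← Finset.prod_mul_distrib]
      refine Finset.prod_eq_one fun i _ => ?_
      rcases Int.units_eq_one_or (Equiv.Perm.sign (ε i)) with h | h <;> simp [h]
    simp_rw [h3]
    simp [Fintype.card_perm]
    ring
  · intro c hc
    refine Finset.sum_eq_zero fun ε _ => ?_
    -- If `c x = c y`, then `W c ε` sends a point of each of the blocks `x`, `y` to `(c x, 0)`.
    rw [det_submatrix_not_injective, mul_zero]
    intro hinj
    apply hc
    intro x y hxy
    have := @hinj (x, (ε x).symm 0) (y, (ε y).symm 0) (by simp [W, hxy])
    exact congrArg Prod.fst this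

/-! ### Tridiagonal Pfaffians -/

lemma sympl_apply {m : ℕ} (c d : Fin m) (e f : Fin 2) :
    sympl m (c, e) (d, f) = if c = d then !![(0 : ℂ), 1; -1, 0] e f else 0 := by
  have hu : (Finset.univ : Finset (Equiv.Perm (Fin 2))) = {1, Equiv.swap 0 1} := by decide
  have hne : (1 : Equiv.Perm (Fin 2)) ≠ Equiv.swap 0 1 := by decide
  simp only [sympl, Matrix.of_apply]
  rw [Fintype.sum_prod_type]
  simp only [hu, Finset.sum_pair hne]
  by_cases h : c = d
  · subst h
    rw [Finset.sum_eq_single c]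
    · fin_cases e <;> fin_cases f <;> simp [Matrix.one_apply]
    · intro x _ hx
      simp [Matrix.one_apply, Ne.symm hx]
    · simp
  · rw [if_neg h]
    refine Finset.sum_eq_zero fun x _ => ?_
    by_cases hc : c = x
    · have hd : d ≠ x := fun hd => h (hc.trans hd.symm)
      simp [Matrix.one_apply, hd]
    · simp [Matrix.one_apply, hc]

/-- The skew-symmetric tridiagonal matrix with superdiagonal `t 0, t 1, …`. -/
noncomputable def tridiag (t : ℕ → ℂ) (n : ℕ) : Matrix (Fin n) (Fin n) ℂ :=
  Matrix.of fun x y => if (y : ℕ) = x + 1 then t x else if (x : ℕ) = y + 1 then -t y else 0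

/-- A lower triangular `B` with `tridiag t (2m) = B J Bᵀ`, `J` the standard symplectic matrix. It encodes
`∑ i, t i • e i ∧ e (i+1) = ∑ c, (t (2c) • e (2c) - t (2c+1) • e (2c+2)) ∧ e (2c+1)`. -/
noncomputable def tridiagFactor (t : ℕ → ℂ) (m : ℕ) :
    Matrix (Fin (2 * m)) (Fin (2 * m)) ℂ :=
  Matrix.of fun x y =>
    if (x : ℕ) = y then (if (y : ℕ) % 2 = 0 then t y else 1)
    else if (x : ℕ) = y + 2 ∧ (y : ℕ) % 2 = 0 then -t (y + 1) else 0

lemma det_tridiagFactor (t : ℕ → ℂ) (m : ℕ) :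
    (tridiagFactor t m).det = ∏ i ∈ Finset.range m, t (2 * i) := by
  rw [Matrix.det_of_isLowerTriangular]
  · rw [← (pairEquiv m).prod_comp, prod_pairs, ← Fin.prod_univ_eq_prod_range]
    refine Finset.prod_congr rfl fun i _ => ?_
    simp [tridiagFactor, pairEquiv_val, Nat.add_mod]
  · intro x y hxy
    have : (x : ℕ) < y := by simpa using hxy
    simp only [tridiagFactor, Matrix.of_apply]
    rw [if_neg (by omega), if_neg (by omega)]

lemma tridiagFactor_conj (t : ℕ → ℂ) (m : ℕ) :
    (tridiag t (2 * m)).submatrix (pairEquiv m) (pairEquiv m) =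
      (tridiagFactor t m).submatrix (pairEquiv m) (pairEquiv m) * sympl m *
        ((tridiagFactor t m).submatrix (pairEquiv m) (pairEquiv m)).transpose := by
  ext ⟨i, e⟩ ⟨j, f⟩
  have h : ∀ B : Matrix (Fin m × Fin 2) (Fin m × Fin 2) ℂ, ∀ x y,
      (B * sympl m * B.transpose) x y
        = ∑ c, (B x (c, 0) * B y (c, 1) - B x (c, 1) * B y (c, 0)) := by
    intro B x y
    simp only [Matrix.mul_apply, Matrix.transpose_apply, Fintype.sum_prod_type, sympl_apply,
      Fin.sum_univ_two]
    refine Finset.sum_congr rfl fun c _ => ?_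
    simp
    ring
  rw [h]
  have h1 : ∀ (i c : Fin m) (e : Fin 2), (tridiagFactor t m).submatrix (pairEquiv m) (pairEquiv m)
      (i, e) (c, 1) = if c = i then (e : ℂ) else 0 := by
    intro i c e
    have := @Fin.ext_iff m c i
    fin_cases e <;> simp [tridiagFactor, pairEquiv_val, this, Nat.add_mod] <;> grind
  simp only [h1, Finset.sum_sub_distrib, mul_ite, mul_zero, ite_mul, zero_mul, Finset.sum_ite_eq',
    Finset.mem_univ, if_true]
  fin_cases e <;> fin_cases f <;>
    simp [tridiagFactor, tridiag, pairEquiv_val] <;> grind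

lemma pfaffian_tridiag (t : ℕ → ℂ) (m : ℕ) :
    pfaffian (tridiag t (2 * m)) = ∏ i ∈ Finset.range m, t (2 * i) := by
  have hm : (Nat.factorial m : ℂ) ≠ 0 := by exact_mod_cast Nat.factorial_ne_zero m
  rw [pfaffian_eq_pfSum, tridiagFactor_conj, pfSum_conj, pfSum_sympl,
    Matrix.det_submatrix_equiv_self, det_tridiagFactor]
  field_simp

lemma pfaffian_conj {m : ℕ} (B A : Matrix (Fin (2 * m)) (Fin (2 * m)) ℂ) :
    pfaffian (B * A * B.transpose) = B.det * pfaffian A := by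
  rw [pfaffian_eq_pfSum, pfaffian_eq_pfSum, ← Matrix.det_submatrix_equiv_self (pairEquiv m) B,
    mul_left_comm, ← pfSum_conj, Matrix.transpose_submatrix, Matrix.submatrix_mul_equiv,
    Matrix.submatrix_mul_equiv]

/-! ### `q`-differences -/

open Polynomial in
/-- The monic polynomial `∏_{l<k} (X - q^l)`. Its coefficients are the signed Gaussian binomial
coefficients `(-1)^(k-i) q^C(k-i,2) [k choose i]_q`, available also at roots of unity. -/
noncomputable def gaussPoly (q : ℂ) (k : ℕ) : ℂ[X] := ∏ l ∈ Finset.range k, (X - C (q ^ l))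

lemma gaussPoly_monic (q : ℂ) (k : ℕ) : (gaussPoly q k).Monic :=
  Polynomial.monic_prod_of_monic _ _ fun _ _ => Polynomial.monic_X_sub_C _

lemma gaussPoly_natDegree (q : ℂ) (k : ℕ) : (gaussPoly q k).natDegree = k := by
  unfold gaussPoly
  rw [Polynomial.natDegree_prod_of_monic _ _ fun _ _ => Polynomial.monic_X_sub_C _]
  simp only [Polynomial.natDegree_X_sub_C]
  simp

lemma gaussPoly_coeff_eq_zero (q : ℂ) {k i : ℕ} (h : k < i) : (gaussPoly q k).coeff i = 0 :=
  Polynomial.coeff_eq_zero_of_natDegree_lt (by rwa [gaussPoly_natDegree])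

lemma gaussPoly_coeff_self (q : ℂ) (k : ℕ) : (gaussPoly q k).coeff k = 1 := by
  have := (gaussPoly_monic q k).coeff_natDegree
  rwa [gaussPoly_natDegree] at this

/-- The `k`-th `q`-difference of a polynomial of degree less than `k` vanishes. -/
lemma gauss_sum_poly (q : ℂ) {k n : ℕ} (hn : k < n) (f : Polynomial ℂ) (hf : f.natDegree < k) :
    ∑ i ∈ Finset.range n, (gaussPoly q k).coeff i * f.eval (q ^ i) = 0 := by
  simp_rw [Polynomial.eval_eq_sum_range' hf, Finset.mul_sum]
  rw [Finset.sum_comm]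
  refine Finset.sum_eq_zero fun s hs => ?_
  have h : (gaussPoly q k).eval (q ^ s) = 0 := by
    unfold gaussPoly
    rw [Polynomial.eval_prod]
    exact Finset.prod_eq_zero hs (by simp)
  rw [Polynomial.eval_eq_sum_range' (n := n) (by rwa [gaussPoly_natDegree])] at h
  rw [← mul_zero (f.coeff s), ← h, Finset.mul_sum]
  refine Finset.sum_congr rfl fun i _ => ?_
  rw [← pow_mul, ← pow_mul, mul_comm s i]
  ring

lemma qPoch_add (q u : ℂ) (m n : ℕ) :
    qPoch q u (m + n) = qPoch q u m * qPoch q (u * q ^ m) n := by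
  unfold qPoch
  rw [Finset.prod_range_add]
  congr 1
  exact Finset.prod_congr rfl fun i _ => by ring

lemma qPoch_zero (q u : ℂ) : qPoch q u 0 = 1 := by simp [qPoch]

lemma qPoch_one (q u : ℂ) : qPoch q u 1 = 1 - u := by simp [qPoch]

lemma qPoch_succ (q u : ℂ) (n : ℕ) : qPoch q u (n + 1) = qPoch q u n * (1 - u * q ^ n) := by
  simp [qPoch, Finset.prod_range_succ]

lemma qPoch_succ' (q u : ℂ) (n : ℕ) : qPoch q u (n + 1) = (1 - u) * qPoch q (u * q) n := by
  rw [add_comm, qPoch_add, qPoch_one, pow_one]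

lemma qPoch_ne_zero_of_le {q u : ℂ} {m n : ℕ} (h : m ≤ n) (hn : qPoch q u n ≠ 0) :
    qPoch q u m ≠ 0 := by
  obtain ⟨d, rfl⟩ := Nat.exists_eq_add_of_le h
  rw [qPoch_add] at hn
  exact left_ne_zero_of_mul hn

lemma one_sub_ne_zero_of_qPoch {q u : ℂ} {i n : ℕ} (h : i < n) (hn : qPoch q u n ≠ 0) :
    1 - u * q ^ i ≠ 0 :=
  Finset.prod_ne_zero_iff.mp hn i (Finset.mem_range.mpr h)

/-- The `k`-th `q`-difference of `x ↦ 1 / (1 - c x)`, at `x = 1`. -/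
lemma gauss_sum_inv (q : ℂ) (k : ℕ) : ∀ (c : ℂ) (n : ℕ), k < n → qPoch q c (k + 1) ≠ 0 →
    ∑ i ∈ Finset.range n, (gaussPoly q k).coeff i / (1 - c * q ^ i)
      = c ^ k * (∏ l ∈ Finset.range k, (q ^ k - q ^ l)) / qPoch q c (k + 1) := by
  induction k with
  | zero =>
    intro c n hn _
    obtain ⟨n, rfl⟩ := Nat.exists_eq_add_of_lt hn
    have h0 : ∑ i ∈ Finset.range (0 + n),
        (gaussPoly q 0).coeff (i + 1) / (1 - c * q ^ (i + 1)) = 0 :=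
      Finset.sum_eq_zero fun i _ => by
        rw [gaussPoly_coeff_eq_zero q (Nat.succ_pos i), zero_div]
    rw [Finset.sum_range_succ', h0]
    simp [gaussPoly, qPoch]
  | succ k ih =>
    intro c n hn hc
    obtain ⟨n, rfl⟩ : ∃ n', n = n' + 1 := ⟨n - 1, by omega⟩
    have hc1 : qPoch q c (k + 1) ≠ 0 := qPoch_ne_zero_of_le (Nat.le_succ _) hc
    have hc' := hc
    rw [qPoch_succ'] at hc'
    have hc2 := right_ne_zero_of_mul hc'
    -- `gaussPoly q (k+1) = gaussPoly q k * (X - q^k)` gives the recurrence of `q`-differences.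
    have hrec : ∑ i ∈ Finset.range (n + 1), (gaussPoly q (k + 1)).coeff i / (1 - c * q ^ i)
        = ∑ i ∈ Finset.range n, (gaussPoly q k).coeff i / (1 - c * q * q ^ i)
          - q ^ k * ∑ i ∈ Finset.range (n + 1), (gaussPoly q k).coeff i / (1 - c * q ^ i) := by
      have h1 : gaussPoly q (k + 1)
          = gaussPoly q k * (Polynomial.X - Polynomial.C (q ^ k)) := by
        simp [gaussPoly, Finset.prod_range_succ]
      rw [Finset.sum_range_succ', Finset.sum_range_succ' _ n, h1, mul_add, Finset.mul_sum,
        ← sub_sub, ← Finset.sum_sub_distrib]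
      refine (congrArg₂ (· + ·) ?_ ?_).trans (sub_eq_add_neg _ _).symm
      · refine Finset.sum_congr rfl fun i _ => ?_
        rw [Polynomial.coeff_mul_X_sub_C, mul_assoc c q, ← pow_succ' q i]
        ring
      · simp only [Polynomial.mul_coeff_zero, Polynomial.coeff_sub, Polynomial.coeff_X_zero,
          Polynomial.coeff_C_zero]
        ring
    have hP : ∏ l ∈ Finset.range (k + 1), (q ^ (k + 1) - q ^ l)
        = (q ^ (k + 1) - 1) * q ^ k * ∏ l ∈ Finset.range k, (q ^ k - q ^ l) := by
      rw [Finset.prod_range_succ']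
      have : ∀ l, q ^ (k + 1) - q ^ (l + 1) = q * (q ^ k - q ^ l) := fun l => by ring
      simp_rw [this, Finset.prod_mul_distrib]
      simp
      ring
    rw [hrec, ih (c * q) n (by omega) hc2, ih c (n + 1) (by omega) hc1, hP]
    have e1 : qPoch q c (k + 1 + 1) = (1 - c) * qPoch q (c * q) (k + 1) := qPoch_succ' _ _ _
    have e2 : qPoch q c (k + 1 + 1) = qPoch q c (k + 1) * (1 - c * q ^ (k + 1)) := qPoch_succ _ _ _
    have n1 : 1 - c ≠ 0 := left_ne_zero_of_mul hc'
    have n2 : 1 - c * q ^ (k + 1) ≠ 0 := by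
      rw [e2] at hc; exact right_ne_zero_of_mul hc
    have i1 : (1 : ℂ) / qPoch q (c * q) (k + 1) = (1 - c) / qPoch q c (k + 1 + 1) := by
      rw [e1]; field_simp
    have i2 : (1 : ℂ) / qPoch q c (k + 1)
        = (1 - c * q ^ (k + 1)) / qPoch q c (k + 1 + 1) := by
      rw [e2]; field_simp
    rw [div_eq_mul_one_div, i1, div_eq_mul_one_div (c ^ k * _), i2]
    ring

/-- Since `g` and the constant `g (1/c)` differ by a multiple of `1 - c x` of degree at most `k`,
replacing `g` by that constant does not change the `q`-difference of `g x / (1 - c x)`. -/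
lemma gauss_sum_div (q : ℂ) {k n : ℕ} (hk : 0 < k) (hn : k < n) (c : ℂ) (hc0 : c ≠ 0)
    (hc : qPoch q c (k + 1) ≠ 0) (g : Polynomial ℂ) (hg : g.natDegree ≤ k) :
    ∑ i ∈ Finset.range n, (gaussPoly q k).coeff i * g.eval (q ^ i) / (1 - c * q ^ i)
      = g.eval c⁻¹ * c ^ k * (∏ l ∈ Finset.range k, (q ^ k - q ^ l)) / qPoch q c (k + 1) := by
  have hV := gauss_sum_inv q k c n hn hc
  set R := (g - Polynomial.C (g.eval c⁻¹)) /ₘ (Polynomial.X - Polynomial.C c⁻¹) with hR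
  have hdiv : (Polynomial.X - Polynomial.C c⁻¹) * R = g - Polynomial.C (g.eval c⁻¹) := by
    rw [hR, Polynomial.mul_divByMonic_eq_iff_isRoot]
    simp
  have hRdeg : R.natDegree < k := by
    rw [hR, Polynomial.natDegree_divByMonic _ (Polynomial.monic_X_sub_C _),
      Polynomial.natDegree_sub_C, Polynomial.natDegree_X_sub_C]
    omega
  have h0 := gauss_sum_poly q hn R hRdeg
  have : ∀ i ∈ Finset.range n,
      (gaussPoly q k).coeff i * g.eval (q ^ i) / (1 - c * q ^ i)
        = g.eval c⁻¹ * ((gaussPoly q k).coeff i / (1 - c * q ^ i))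
          - c⁻¹ * ((gaussPoly q k).coeff i * R.eval (q ^ i)) := by
    intro i _
    rcases lt_or_ge k i with hi | hi
    · simp [gaussPoly_coeff_eq_zero q hi]
    have hne : 1 - c * q ^ i ≠ 0 := one_sub_ne_zero_of_qPoch (Nat.lt_succ_of_le hi) hc
    have he := congrArg (Polynomial.eval (q ^ i)) hdiv
    simp only [Polynomial.eval_mul, Polynomial.eval_sub, Polynomial.eval_X,
      Polynomial.eval_C] at he
    have hge : g.eval (q ^ i) = (q ^ i - c⁻¹) * R.eval (q ^ i) + g.eval c⁻¹ := by rw [he]; ring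
    have hx : q ^ i - c⁻¹ = -(c⁻¹ * (1 - c * q ^ i)) := by field_simp; ring
    rw [hge, hx]
    generalize 1 - c * q ^ i = d at hne
    field_simp
    ring
  rw [Finset.sum_congr rfl this, Finset.sum_sub_distrib, ← Finset.mul_sum, ← Finset.mul_sum, h0, hV]
  ring

/-! ### Little `q`-Jacobi polynomials and the skew form -/

open Polynomial in
/-- The polynomial `(u x; q)_n` in `x`. -/
noncomputable def pochPoly (q u : ℂ) (n : ℕ) : ℂ[X] :=
  ∏ r ∈ Finset.range n, (1 - C (u * q ^ r) * X)

lemma pochPoly_eval (q u x : ℂ) (n : ℕ) : (pochPoly q u n).eval x = qPoch q (u * x) n := by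
  unfold pochPoly qPoch
  rw [Polynomial.eval_prod]
  refine Finset.prod_congr rfl fun r _ => ?_
  simp only [Polynomial.eval_sub, Polynomial.eval_one, Polynomial.eval_mul, Polynomial.eval_C,
    Polynomial.eval_X]
  ring

lemma pochPoly_natDegree_le (q u : ℂ) (n : ℕ) : (pochPoly q u n).natDegree ≤ n := by
  unfold pochPoly
  refine (Polynomial.natDegree_prod_le _ _).trans ?_
  refine (Finset.sum_le_card_nsmul _ _ 1 fun r _ => ?_).trans (by simp)
  refine (Polynomial.natDegree_sub_le _ _).trans ?_
  rw [Polynomial.natDegree_one, Nat.zero_max]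
  exact (Polynomial.natDegree_C_mul_le _ _).trans Polynomial.natDegree_X_le

/-- The moments `(aq;q)_n / (abq²;q)_n`. -/
noncomputable def moment (q a b : ℂ) (n : ℕ) : ℂ :=
  qPoch q (a * q) n / qPoch q (a * b * q ^ 2) n

/-- The coefficient of `x^i` in the monic little `q`-Jacobi polynomial of degree `k` with
parameters `(a, b / q)`. For `k = 1`, `i = 0` the denominator `1 - abq` may vanish, but the value
of that entry is irrelevant: it changes `p_1` by a multiple of `p_0 = 1`, and `⟨p_k, 1⟩ = 0` for all
`k ≠ 1`. -/
noncomputable def jacobiCoeff (q a b : ℂ) (k i : ℕ) : ℂ :=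
  (gaussPoly q k).coeff i * qPoch q (a * q ^ (i + 1)) (k - i) / qPoch q (a * b * q ^ (k + i)) (k - i)

lemma jacobiCoeff_self (q a b : ℂ) (k : ℕ) : jacobiCoeff q a b k k = 1 := by
  simp [jacobiCoeff, gaussPoly_coeff_self, qPoch_zero]

lemma jacobiCoeff_eq_zero (q a b : ℂ) {k i : ℕ} (h : k < i) : jacobiCoeff q a b k i = 0 := by
  simp [jacobiCoeff, gaussPoly_coeff_eq_zero q h]

/-- `-⟨p_{j+1}, x^j⟩` for the skew form `⟨x^i, x^j⟩ = (q^i - q^j) μ_{i+j}`. -/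
noncomputable def superdiag (q a b : ℂ) (j : ℕ) : ℂ :=
  qPoch q (a * q) (j + 1) * qPoch q q (j + 1) * qPoch q (b * q) j * a ^ j * q ^ (j * (j + 1)) /
    (qPoch q (a * b * q ^ 2) (2 * j + 1) * qPoch q (a * b * q ^ (j + 1)) j)

lemma qPoch_numerator (q a : ℂ) {k i : ℕ} (j : ℕ) (hi : i ≤ k) :
    qPoch q (a * q ^ (i + 1)) (k - i) * qPoch q (a * q) (i + j)
      = qPoch q (a * q) k * qPoch q (a * q * q ^ i) j := by
  obtain ⟨d, rfl⟩ := Nat.exists_eq_add_of_le hi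
  rw [qPoch_add, qPoch_add, Nat.add_sub_cancel_left, show a * q ^ (i + 1) = a * q * q ^ i by ring]
  ring

lemma sub_mul_pochPoly_natDegree (q u v : ℂ) (n : ℕ) :
    ((Polynomial.X - Polynomial.C v) * pochPoly q u n).natDegree ≤ n + 1 := by
  refine Polynomial.natDegree_mul_le.trans ?_
  rw [Polynomial.natDegree_X_sub_C]
  have := pochPoly_natDegree_le q u n
  omega

/-- `⟨p_k, x^j⟩ = 0` for `j ≤ k - 2`: up to a constant this is the `k`-th `q`-difference of a
polynomial of degree `k - 1`. -/
lemma skew_sum_eq_zero (q a b : ℂ) (j d n : ℕ) (hn : j + 2 + d < n)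
    (hD : qPoch q (a * b * q ^ 2) (2 * (j + 2 + d) - 2) ≠ 0) :
    ∑ i ∈ Finset.range n, jacobiCoeff q a b (j + 2 + d) i *
      ((q ^ i - q ^ j) * moment q a b (i + j)) = 0 := by
  set k := j + 2 + d with hk
  set g : Polynomial ℂ := (Polynomial.X - Polynomial.C (q ^ j)) * pochPoly q (a * q) j *
    pochPoly q (a * b * q ^ (j + 2)) d with hg
  have hdeg : g.natDegree < k := by
    have h1 := sub_mul_pochPoly_natDegree q (a * q) (q ^ j) j
    have h2 := pochPoly_natDegree_le q (a * b * q ^ (j + 2)) d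
    have h3 : g.natDegree ≤ _ := Polynomial.natDegree_mul_le
    omega
  have h0 := gauss_sum_poly q hn g hdeg
  rw [← mul_zero (qPoch q (a * q) k / qPoch q (a * b * q ^ 2) (2 * k - 2)), ← h0, Finset.mul_sum]
  refine Finset.sum_congr rfl fun i _ => ?_
  rcases lt_or_ge k i with hi | hi
  · simp [jacobiCoeff_eq_zero q a b hi, gaussPoly_coeff_eq_zero q hi]
  have hnum := qPoch_numerator q a j hi
  -- `(abq²)_{2k-2} = (abq²)_{i+k-2} (abq^{k+i})_{k-i}`, and the first factor contains `(abq²)_{i+j}`.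
  have hden : qPoch q (a * b * q ^ 2) (2 * k - 2) = qPoch q (a * b * q ^ 2) (i + j) *
      qPoch q (a * b * q ^ (j + 2) * q ^ i) d * qPoch q (a * b * q ^ (k + i)) (k - i) := by
    rw [show 2 * k - 2 = (i + j) + d + (k - i) by omega, qPoch_add, qPoch_add,
      show a * b * q ^ 2 * q ^ (i + j) = a * b * q ^ (j + 2) * q ^ i by ring,
      show a * b * q ^ 2 * q ^ (i + j + d) = a * b * q ^ (k + i) by rw [hk]; ring]
  rw [hden] at hD ⊢
  have n3 := right_ne_zero_of_mul hD
  have n1 := left_ne_zero_of_mul (left_ne_zero_of_mul hD)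
  have n2 := right_ne_zero_of_mul (left_ne_zero_of_mul hD)
  simp only [jacobiCoeff, moment, hg, Polynomial.eval_mul, Polynomial.eval_sub, Polynomial.eval_X,
    Polynomial.eval_C, pochPoly_eval]
  rw [div_mul_eq_mul_div, div_mul_eq_mul_div, mul_div_assoc', mul_div_assoc', div_div,
    div_eq_div_iff (mul_ne_zero n1 n3) hD]
  linear_combination ((gaussPoly q k).coeff i * (q ^ i - q ^ j) * qPoch q (a * b * q ^ 2) (i + j) *
      qPoch q (a * b * q ^ (j + 2) * q ^ i) d * qPoch q (a * b * q ^ (k + i)) (k - i)) * hnum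

lemma prod_pow_sub (q : ℂ) (k : ℕ) :
    ∏ l ∈ Finset.range k, (q ^ k - q ^ l)
      = (-1) ^ k * q ^ (∑ l ∈ Finset.range k, l) * qPoch q q k := by
  have h : ∀ l ∈ Finset.range k, q ^ k - q ^ l = (-1) * q ^ l * (1 - q * q ^ (k - 1 - l)) := by
    intro l hl
    have hl' := Finset.mem_range.mp hl
    have : q ^ k = q ^ l * (q * q ^ (k - 1 - l)) := by
      rw [← pow_succ', ← pow_add]; congr 1; omega
    rw [this]; ring
  rw [Finset.prod_congr rfl h, Finset.prod_mul_distrib, Finset.prod_mul_distrib,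
    Finset.prod_pow_eq_pow_sum, Finset.prod_range_reflect (fun l => 1 - q * q ^ l)]
  simp [qPoch]

lemma prod_sub_pow (q a b : ℂ) (j : ℕ) :
    ∏ r ∈ Finset.range j, (a * b * q ^ (j + 1) - a * q * q ^ r)
      = (-1) ^ j * a ^ j * q ^ (∑ r ∈ Finset.range (j + 1), r) * qPoch q (b * q) j := by
  have h : ∀ r ∈ Finset.range j, a * b * q ^ (j + 1) - a * q * q ^ r
      = (-1) * a * q ^ (r + 1) * (1 - b * q * q ^ (j - 1 - r)) := by
    intro r hr
    have hr' := Finset.mem_range.mp hr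
    have : q ^ (j + 1) = q ^ (r + 1) * (q * q ^ (j - 1 - r)) := by
      rw [← pow_succ', ← pow_add]; congr 1; omega
    rw [this]; ring
  rw [Finset.prod_congr rfl h, Finset.prod_mul_distrib, Finset.prod_mul_distrib,
    Finset.prod_pow_eq_pow_sum, Finset.prod_range_reflect (fun l => 1 - b * q * q ^ l),
    Finset.sum_range_succ']
  simp [qPoch, neg_pow a]

/-- The first nonvanishing pairing `⟨p_{j+1}, x^j⟩`. For `j ≥ 1` it is the `q`-difference of
`g x / (1 - c x)` with `c = abq^{j+1}` and `deg g = j + 1`. -/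
lemma skew_sum_eq (q a b : ℂ) (hq : q ≠ 0) (ha : a ≠ 0) (hb : b ≠ 0) (j n : ℕ) (hn : j + 1 < n)
    (hD : qPoch q (a * b * q ^ 2) (2 * j + 1) ≠ 0) :
    ∑ i ∈ Finset.range n, jacobiCoeff q a b (j + 1) i *
      ((q ^ i - q ^ j) * moment q a b (i + j)) = -superdiag q a b j := by
  rcases j with _ | j
  · rw [Finset.sum_eq_single 1]
    · rw [jacobiCoeff_self]
      simp [moment, superdiag, qPoch_one, qPoch_zero]
      ring
    · intro i _ hi
      rcases i with _ | i
      · simp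
      · rw [jacobiCoeff_eq_zero q a b (by omega), zero_mul]
    · intro h
      exact absurd (Finset.mem_range.mpr hn) h
  set k := j + 1 + 1 with hk
  set c := a * b * q ^ k with hc
  have hc0 : c ≠ 0 := mul_ne_zero (mul_ne_zero ha hb) (pow_ne_zero _ hq)
  have hcP : qPoch q c (k + 1) ≠ 0 := by
    have h : qPoch q (a * b * q ^ 2) (2 * (j + 1) + 1)
        = qPoch q (a * b * q ^ 2) j * qPoch q c (k + 1) := by
      rw [show 2 * (j + 1) + 1 = j + (k + 1) by omega, qPoch_add, hc, hk]
      congr 2; ring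
    rw [h] at hD
    exact right_ne_zero_of_mul hD
  set g : Polynomial ℂ := (Polynomial.X - Polynomial.C (q ^ (j + 1))) * pochPoly q (a * q) (j + 1)
    with hg
  have hdeg : g.natDegree ≤ k := sub_mul_pochPoly_natDegree q (a * q) (q ^ (j + 1)) (j + 1)
  have hmain := gauss_sum_div q (by omega) hn c hc0 hcP g hdeg
  have hD2 : qPoch q (a * b * q ^ 2) (2 * k - 2) ≠ 0 :=
    qPoch_ne_zero_of_le (by omega) hD
  have hsum : ∑ i ∈ Finset.range n, jacobiCoeff q a b k i *
      ((q ^ i - q ^ (j + 1)) * moment q a b (i + (j + 1)))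
      = qPoch q (a * q) k / qPoch q (a * b * q ^ 2) (2 * k - 2) *
        ∑ i ∈ Finset.range n, (gaussPoly q k).coeff i * g.eval (q ^ i) / (1 - c * q ^ i) := by
    rw [Finset.mul_sum]
    refine Finset.sum_congr rfl fun i _ => ?_
    rcases lt_or_ge k i with hi | hi
    · simp [jacobiCoeff_eq_zero q a b hi, gaussPoly_coeff_eq_zero q hi]
    have hnum := qPoch_numerator q a (j + 1) hi
    have hden : qPoch q (a * b * q ^ 2) (2 * k - 2) = qPoch q (a * b * q ^ 2) (i + j) *
        qPoch q (a * b * q ^ (k + i)) (k - i) := by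
      rw [show 2 * k - 2 = (i + j) + (k - i) by omega, qPoch_add, hk]
      congr 2; ring
    have hden2 : qPoch q (a * b * q ^ 2) (i + (j + 1))
        = qPoch q (a * b * q ^ 2) (i + j) * (1 - c * q ^ i) := by
      rw [← add_assoc, qPoch_succ, hc, hk]
      congr 1; ring
    have n4 : 1 - c * q ^ i ≠ 0 := one_sub_ne_zero_of_qPoch (Nat.lt_succ_of_le hi) hcP
    rw [hden] at hD2 ⊢
    have n1 := left_ne_zero_of_mul hD2
    have n3 := right_ne_zero_of_mul hD2
    simp only [jacobiCoeff, moment, hg, hden2, Polynomial.eval_mul, Polynomial.eval_sub,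
      Polynomial.eval_X, Polynomial.eval_C, pochPoly_eval]
    rw [div_mul_eq_mul_div, mul_div_assoc', mul_div_assoc', div_div, div_mul_div_comm,
      div_eq_div_iff (mul_ne_zero (mul_ne_zero n1 n4) n3) (mul_ne_zero hD2 n4)]
    linear_combination ((gaussPoly q k).coeff i * (q ^ i - q ^ (j + 1)) *
      qPoch q (a * b * q ^ 2) (i + j) * (1 - c * q ^ i) *
      qPoch q (a * b * q ^ (k + i)) (k - i)) * hnum
  have hgc : g.eval c⁻¹ * c ^ k = (1 - c * q ^ (j + 1)) *
      ((-1) ^ (j + 1) * a ^ (j + 1) * q ^ (∑ r ∈ Finset.range k, r) * qPoch q (b * q) (j + 1)) := by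
    rw [hk, ← prod_sub_pow q a b (j + 1), pow_succ c, hg, Polynomial.eval_mul, pochPoly_eval,
      ← hk, ← hc]
    have : qPoch q (a * q * c⁻¹) (j + 1) * c ^ (j + 1)
        = ∏ r ∈ Finset.range (j + 1), (c - a * q * q ^ r) := by
      rw [qPoch, ← Finset.card_range (j + 1), ← Finset.prod_const, Finset.card_range,
        ← Finset.prod_mul_distrib]
      refine Finset.prod_congr rfl fun r _ => ?_
      field_simp
    rw [← this]
    simp only [Polynomial.eval_sub, Polynomial.eval_X, Polynomial.eval_C]
    have hcc : c⁻¹ * c = 1 := inv_mul_cancel₀ hc0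
    linear_combination (qPoch q (a * q * c⁻¹) (j + 1) * c ^ (j + 1)) * hcc
  rw [hsum, hmain, hgc, prod_pow_sub, superdiag, ← hk, ← hc]
  have hexp : q ^ ((j + 1) * k)
      = q ^ (∑ r ∈ Finset.range k, r) * q ^ (∑ r ∈ Finset.range k, r) := by
    rw [← pow_add, ← two_mul, mul_comm 2, Finset.sum_range_id_mul_two, hk, mul_comm]
    rfl
  have hsign : (-1 : ℂ) ^ (j + 1) * (-1) ^ k = -1 := by
    rw [hk, pow_succ _ (j + 1), ← mul_assoc, ← mul_pow]; simp
  have f1 : qPoch q (a * b * q ^ 2) (2 * (j + 1) + 1)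
      = qPoch q (a * b * q ^ 2) (2 * k - 2) * (1 - c * q ^ k) := by
    rw [show 2 * k - 2 = 2 * (j + 1) by omega, qPoch_succ, hc, hk]
    congr 1; ring
  have f2 : qPoch q c (k + 1) = qPoch q c (j + 1) * (1 - c * q ^ (j + 1)) * (1 - c * q ^ k) := by
    rw [qPoch_succ, hk, qPoch_succ]
  rw [f2] at hcP ⊢
  rw [f1, hexp]
  have n1 := right_ne_zero_of_mul hcP
  have n2 := right_ne_zero_of_mul (left_ne_zero_of_mul hcP)
  have n3 := left_ne_zero_of_mul (left_ne_zero_of_mul hcP)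
  rw [div_mul_div_comm, ← neg_div, div_eq_div_iff (mul_ne_zero hD2 hcP)
    (mul_ne_zero (mul_ne_zero hD2 n1) n3)]
  generalize q ^ (∑ r ∈ Finset.range k, r) = Q
  generalize 1 - c * q ^ (j + 1) = y
  generalize 1 - c * q ^ k = z
  linear_combination (qPoch q (a * q) k * y * a ^ (j + 1) * Q * Q * qPoch q (b * q) (j + 1) *
    qPoch q q k * qPoch q (a * b * q ^ 2) (2 * k - 2) * z * qPoch q c (j + 1)) * hsign

lemma jacobi_mul_skew (q a b : ℂ) (m : ℕ) (k j : Fin (2 * m)) :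
    ((Matrix.of fun k i : Fin (2 * m) => jacobiCoeff q a b k i) *
      (Matrix.of fun i j : Fin (2 * m) => (q ^ (i : ℕ) - q ^ (j : ℕ)) * moment q a b (i + j))) k j
      = ∑ i ∈ Finset.range (2 * m), jacobiCoeff q a b k i *
          ((q ^ i - q ^ (j : ℕ)) * moment q a b (i + j)) := by
  rw [Matrix.mul_apply,
    ← Fin.sum_univ_eq_sum_range (fun i => jacobiCoeff q a b k i *
          ((q ^ i - q ^ (j : ℕ)) * moment q a b (i + j)))]
  rfl

/-- In the basis of little `q`-Jacobi polynomials the skew form is tridiagonal. -/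
lemma conj_eq_tridiag (q a b : ℂ) (hq : q ≠ 0) (ha : a ≠ 0) (hb : b ≠ 0) (m : ℕ)
    (hD : qPoch q (a * b * q ^ 2) (4 * m - 3) ≠ 0) :
    (Matrix.of fun k i : Fin (2 * m) => jacobiCoeff q a b k i) *
      (Matrix.of fun i j : Fin (2 * m) => (q ^ (i : ℕ) - q ^ (j : ℕ)) * moment q a b (i + j)) *
      (Matrix.of fun k i : Fin (2 * m) => jacobiCoeff q a b k i).transpose
      = tridiag (superdiag q a b) (2 * m) := by
  set T : Matrix (Fin (2 * m)) (Fin (2 * m)) ℂ :=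
    Matrix.of fun k i : Fin (2 * m) => jacobiCoeff q a b k i with hT
  set A : Matrix (Fin (2 * m)) (Fin (2 * m)) ℂ :=
    Matrix.of fun i j : Fin (2 * m) => (q ^ (i : ℕ) - q ^ (j : ℕ)) * moment q a b (i + j) with hA
  have hskewA : A.transpose = -A := by
    ext i j
    simp only [hA, Matrix.transpose_apply, Matrix.neg_apply, Matrix.of_apply, add_comm (j : ℕ)]
    ring
  have hskew : ∀ k l, (T * A * T.transpose) l k = -(T * A * T.transpose) k l := by
    intro k l
    have : (T * A * T.transpose).transpose = -(T * A * T.transpose) := by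
      rw [Matrix.transpose_mul, Matrix.transpose_mul, Matrix.transpose_transpose, hskewA,
        Matrix.neg_mul, Matrix.mul_neg, Matrix.mul_assoc]
    exact congrFun (congrFun this k) l
  have hlow : ∀ k l : Fin (2 * m), (l : ℕ) < k →
      (T * A * T.transpose) k l = tridiag (superdiag q a b) (2 * m) k l := by
    intro k l hlk
    have hk := k.isLt
    have hzero : ∀ j : Fin (2 * m), (j : ℕ) + 2 ≤ k → (T * A) k j = 0 := by
      intro j hj
      rw [hT, hA, jacobi_mul_skew]
      obtain ⟨d, hd⟩ := Nat.exists_eq_add_of_le hj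
      rw [hd]
      exact skew_sum_eq_zero q a b j d (2 * m) (by omega) (qPoch_ne_zero_of_le (by omega) hD)
    rw [Matrix.mul_apply, Finset.sum_eq_single l]
    · rw [Matrix.transpose_apply, show T l l = 1 from jacobiCoeff_self q a b l, mul_one]
      by_cases h : (k : ℕ) = l + 1
      · rw [hT, hA, jacobi_mul_skew, h, skew_sum_eq q a b hq ha hb l (2 * m) (by omega)
          (qPoch_ne_zero_of_le (by omega) hD)]
        simp only [tridiag, Matrix.of_apply]
        rw [if_neg (by omega), if_pos h]
      · rw [hzero l (by omega)]
        simp only [tridiag, Matrix.of_apply]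
        rw [if_neg (by omega), if_neg h]
    · intro j _ hj
      have hj' : (j : ℕ) ≠ l := fun h => hj (Fin.ext h)
      rcases lt_or_gt_of_ne hj' with h | h
      · rw [hzero j (by omega), zero_mul]
      · rw [Matrix.transpose_apply, show T l j = 0 from jacobiCoeff_eq_zero q a b h, mul_zero]
    · simp
  ext k l
  rcases lt_trichotomy (l : ℕ) k with h | h | h
  · exact hlow k l h
  · have hkl : l = k := Fin.ext h
    subst hkl
    have := hskew l l
    simp only [tridiag, Matrix.of_apply]
    rw [if_neg (by omega), if_neg (by omega)]
    exact self_eq_neg.mp this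
  · rw [hskew l k, hlow l k h]
    simp only [tridiag, Matrix.of_apply]
    by_cases h1 : (l : ℕ) = k + 1
    · rw [if_neg (by omega), if_pos h1, if_pos h1, neg_neg]
    · rw [if_neg (by omega), if_neg h1, if_neg h1, if_neg (by omega), neg_zero]

/-! ### Collecting the product -/

/-- Telescoping of the denominators of the `superdiag (2n)`; with `u = ab`. -/
lemma prod_superdiag_denominator (q u : ℂ) (m : ℕ) :
    ∏ n ∈ Finset.range m, (qPoch q (u * q ^ 2) (4 * n + 1) * qPoch q (u * q ^ (2 * n + 1)) (2 * n))
      = ∏ n ∈ Finset.range m, qPoch q (u * q ^ 2) (2 * (n + m) - 1) := by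
  induction m with
  | zero => simp
  | succ m ih =>
    have hstep : ∀ n ∈ Finset.range m, qPoch q (u * q ^ 2) (2 * (n + (m + 1)) - 1)
        = qPoch q (u * q ^ 2) (2 * (n + m) - 1) *
          qPoch q (u * q ^ (2 * m + 1) * q ^ (2 * n)) 2 := by
      intro n hn
      have := Finset.mem_range.mp hn
      rw [show 2 * (n + (m + 1)) - 1 = (2 * (n + m) - 1) + 2 by omega, qPoch_add]
      congr 2
      rw [mul_assoc, mul_assoc, ← pow_add, ← pow_add]
      congr 2
      omega
    have hpair : ∀ (v : ℂ) (r : ℕ),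
        ∏ n ∈ Finset.range r, qPoch q (v * q ^ (2 * n)) 2 = qPoch q v (2 * r) := by
      intro v r
      induction r with
      | zero => simp [qPoch]
      | succ r ihr => rw [Finset.prod_range_succ, ihr, mul_add, mul_one, qPoch_add]
    rw [Finset.prod_range_succ, ih, Finset.prod_range_succ, Finset.prod_congr rfl hstep,
      Finset.prod_mul_distrib, hpair, show 2 * (m + (m + 1)) - 1 = 4 * m + 1 by omega]
    ring

lemma exponent_succ (m : ℕ) :
    (m + 1) * m * (4 * (m + 1) + 1) / 3 = m * (m - 1) * (4 * m + 1) / 3 + 2 * m * (2 * m + 1) := by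
  rcases m with _ | m
  · simp
  · rw [Nat.add_sub_cancel, ← Nat.add_mul_div_right _ _ (by norm_num : 0 < 3)]
    congr 1
    ring

lemma prod_powers (q a : ℂ) (m : ℕ) :
    ∏ n ∈ Finset.range m, (a ^ (2 * n) * q ^ (2 * n * (2 * n + 1)))
      = a ^ (m * (m - 1)) * q ^ (m * (m - 1) * (4 * m + 1) / 3) := by
  induction m with
  | zero => simp
  | succ m ih =>
    rw [Finset.prod_range_succ, ih, Nat.add_sub_cancel, exponent_succ, pow_add q,
      show (m + 1) * m = m * (m - 1) + 2 * m by rcases m with _ | m <;> simp; ring, pow_add a]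
    ring

/-- Pfaffian evaluation (Corollary 3.4): for `m ≥ 1`, the Pfaffian of the
skew-symmetric matrix with entries `(q^{i-1} - q^{j-1}) (aq;q)_{i+j-2} / (abq²;q)_{i+j-2}`,
`1 ≤ i,j ≤ 2m`, equals
`a^{m(m-1)} q^{m(m-1)(4m+1)/3}
  ∏_{k=1}^m (q;q)_{2k-1} (aq;q)_{2k-1} (bq;q)_{2k-2} / (abq²;q)_{2(k+m)-3}`. -/
theorem pfaffian_evaluation
    (q a b : ℂ) (hq : q ≠ 0) (ha : a ≠ 0) (hb : b ≠ 0)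
    (m : ℕ) (hm : 1 ≤ m) (habq : qPoch q (a * b * q ^ 2) (4 * m - 3) ≠ 0) :
    pfaffian (Matrix.of fun i j : Fin (2 * m) =>
        (q ^ (i : ℕ) - q ^ (j : ℕ)) *
          qPoch q (a * q) ((i : ℕ) + (j : ℕ)) / qPoch q (a * b * q ^ 2) ((i : ℕ) + (j : ℕ)))
      = a ^ (m * (m - 1)) * q ^ (m * (m - 1) * (4 * m + 1) / 3) *
          ∏ k ∈ Finset.Icc 1 m,
            qPoch q q (2 * k - 1) * qPoch q (a * q) (2 * k - 1) * qPoch q (b * q) (2 * k - 2) /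
              qPoch q (a * b * q ^ 2) (2 * (k + m) - 3) := by
  have hA : (Matrix.of fun i j : Fin (2 * m) => (q ^ (i : ℕ) - q ^ (j : ℕ)) *
      qPoch q (a * q) ((i : ℕ) + (j : ℕ)) / qPoch q (a * b * q ^ 2) ((i : ℕ) + (j : ℕ)))
      = Matrix.of fun i j : Fin (2 * m) =>
          (q ^ (i : ℕ) - q ^ (j : ℕ)) * moment q a b (i + j) := by
    ext i j
    simp only [Matrix.of_apply, moment, mul_div_assoc]
  have hdet : (Matrix.of fun k i : Fin (2 * m) => jacobiCoeff q a b k i).det = 1 := by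
    rw [Matrix.det_of_isLowerTriangular]
    · exact Finset.prod_eq_one fun i _ => jacobiCoeff_self q a b i
    · intro x y hxy
      exact jacobiCoeff_eq_zero q a b (by simpa using hxy)
  have hpf := pfaffian_conj (Matrix.of fun k i : Fin (2 * m) => jacobiCoeff q a b k i)
    (Matrix.of fun i j : Fin (2 * m) => (q ^ (i : ℕ) - q ^ (j : ℕ)) * moment q a b (i + j))
  rw [conj_eq_tridiag q a b hq ha hb m habq, pfaffian_tridiag, hdet, one_mul] at hpf
  rw [hA, ← hpf, ← prod_powers, ← Finset.Ico_add_one_right_eq_Icc, Finset.prod_Ico_eq_prod_range,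
    Nat.add_sub_cancel, Finset.prod_div_distrib]
  have hden := prod_superdiag_denominator q (a * b) m
  have e1 : ∀ n, 2 * (1 + n) - 1 = 2 * n + 1 := fun n => by omega
  have e2 : ∀ n, 2 * (1 + n) - 2 = 2 * n := fun n => by omega
  have e3 : ∀ n, 2 * (1 + n + m) - 3 = 2 * (n + m) - 1 := fun n => by omega
  simp only [e1, e2, e3]
  rw [← hden, ← mul_div_assoc, ← Finset.prod_mul_distrib, ← Finset.prod_div_distrib]
  refine Finset.prod_congr rfl fun n _ => ?_
  rw [superdiag, show 2 * (2 * n) + 1 = 4 * n + 1 by ring]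
  ring
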